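/- For all real numbers a, b with 0 < a ≤ b < 1, the functions z ↦ η²·|z|^(2η−2)/(1 − |z|^(2η))² converge uniformly on the closed annulus {z ∈ ℂ : a ≤ |z| ≤ b} to z ↦ 1/(|z|²·(log|z|²)²) as η → 0⁺. (Locally uniform convergence of the model edge density to the cusp density on compact subsets of the punctured disc.) -/

import Mathlib

open Filter Topology

/-!
Write `E u = (exp u - 1) / u`, extended by `E 0 = 1`; this is the continuous, nowhere vanishing
function `dslope exp 0`. With `L = log ‖z‖` and `u = 2ηL` one has `‖z‖ ^ (2η) = exp u` and
`1 - ‖z‖ ^ (2η) = -2ηL * E u`, so the factor `η ^ 2` cancels and the edge density equals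
`exp u / (‖z‖ ^ 2 * (2L) ^ 2 * E u ^ 2)` for `η > 0`. The latter expression is jointly continuous
in `(η, z)` up to and including `η = 0`, where it is the cusp density. Compactness of the annulus
turns joint continuity into uniform convergence.
-/

/-- The removable singularity of `(exp u - 1) / u` is filled in continuously. -/
lemma continuous_dslope_exp : Continuous (dslope Real.exp 0) := by
  rw [← continuousOn_univ, continuousOn_dslope univ_mem]
  exact ⟨Real.continuous_exp.continuousOn, Real.differentiableAt_exp⟩

lemma dslope_exp_ne_zero (u : ℝ) : dslope Real.exp 0 u ≠ 0 := by
  rcases eq_or_ne u 0 with rfl | hu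
  · simp [dslope_same]
  · intro h
    have key := sub_smul_dslope Real.exp 0 u
    rw [h, smul_zero, Real.exp_zero, eq_comm, sub_eq_zero, Real.exp_eq_one_iff] at key
    exact hu key

/-- The edge density as a function of the cone parameter `η` and the modulus `r`, in the form that
is continuous across `η = 0`. -/
noncomputable def regularizedDensity (η r : ℝ) : ℝ :=
  Real.exp (2 * η * Real.log r) /
    (r ^ 2 * (2 * Real.log r) ^ 2 * dslope Real.exp 0 (2 * η * Real.log r) ^ 2)

lemma regularizedDensity_zero (r : ℝ) :
    regularizedDensity 0 r = 1 / (r ^ 2 * Real.log (r ^ 2) ^ 2) := by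
  simp [regularizedDensity, dslope_same, Real.log_pow]

lemma regularizedDensity_of_pos {η r : ℝ} (hη : 0 < η) (hr : 0 < r) (hr1 : r < 1) :
    regularizedDensity η r = η ^ 2 * r ^ (2 * η - 2) / (1 - r ^ (2 * η)) ^ 2 := by
  have hL : Real.log r ≠ 0 := (Real.log_neg hr hr1).ne
  have hE := dslope_exp_ne_zero (2 * η * Real.log r)
  have key : 2 * η * Real.log r * dslope Real.exp 0 (2 * η * Real.log r)
      = r ^ (2 * η) - 1 := by
    have h := sub_smul_dslope Real.exp 0 (2 * η * Real.log r)
    rw [sub_zero, smul_eq_mul, Real.exp_zero] at h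
    rw [h, Real.rpow_def_of_pos hr, mul_comm (Real.log r)]
  have hden : (1 - r ^ (2 * η)) ^ 2
      = (2 * η * Real.log r * dslope Real.exp 0 (2 * η * Real.log r)) ^ 2 := by
    rw [key]; ring
  rw [hden, Real.rpow_sub hr, Real.rpow_two, Real.rpow_def_of_pos hr, mul_comm (Real.log r),
    regularizedDensity]
  field_simp

theorem edge_density_tendstoUniformlyOn_cusp_density
    (a b : ℝ) (ha : 0 < a) (hab : a ≤ b) (hb : b < 1) :
    TendstoUniformlyOn
      (fun (η : ℝ) (z : ℂ) => η ^ 2 * ‖z‖ ^ (2 * η - 2) / (1 - ‖z‖ ^ (2 * η)) ^ 2)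
      (fun z : ℂ => 1 / (‖z‖ ^ 2 * (Real.log (‖z‖ ^ 2)) ^ 2))
      (𝓝[>] 0) {z : ℂ | a ≤ ‖z‖ ∧ ‖z‖ ≤ b} := by
  have hcompact : IsCompact {z : ℂ | a ≤ ‖z‖ ∧ ‖z‖ ≤ b} := by
    refine (isCompact_closedBall (0 : ℂ) b).of_isClosed_subset ?_ fun z hz => by simpa using hz.2
    exact (isClosed_le continuous_const continuous_norm).inter
      (isClosed_le continuous_norm continuous_const)
  have hcont : ContinuousOn (Function.uncurry fun (η : ℝ) (z : ℂ) => regularizedDensity η ‖z‖)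
      (Set.univ ×ˢ {z : ℂ | a ≤ ‖z‖ ∧ ‖z‖ ≤ b}) := by
    have hlog : ContinuousOn (fun p : ℝ × ℂ => Real.log ‖p.2‖)
        (Set.univ ×ˢ {z : ℂ | a ≤ ‖z‖ ∧ ‖z‖ ≤ b}) :=
      ContinuousOn.log (by fun_prop) fun p hp => (ha.trans_le hp.2.1).ne'
    have hu : ContinuousOn (fun p : ℝ × ℂ => 2 * p.1 * Real.log ‖p.2‖)
        (Set.univ ×ˢ {z : ℂ | a ≤ ‖z‖ ∧ ‖z‖ ≤ b}) := by fun_prop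
    have hE := continuous_dslope_exp.comp_continuousOn hu
    refine ContinuousOn.div (Real.continuous_exp.comp_continuousOn hu)
      (ContinuousOn.mul (by fun_prop) (hE.pow 2)) fun p hp => ?_
    have hr : 0 < ‖p.2‖ := ha.trans_le hp.2.1
    have hL : Real.log ‖p.2‖ ≠ 0 := (Real.log_neg hr (hp.2.2.trans_lt hb)).ne
    have hE0 := dslope_exp_ne_zero (2 * p.1 * Real.log ‖p.2‖)
    exact mul_ne_zero (by positivity) (pow_ne_zero 2 hE0)
  intro V hV
  obtain ⟨v, hv, hvV⟩ := hcompact.mem_uniformity_of_prod hcont (Set.mem_univ 0)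
    (tendsto_swap_uniformity hV)
  rw [nhdsWithin_univ] at hv
  filter_upwards [mem_nhdsWithin_of_mem_nhds hv, self_mem_nhdsWithin] with η hηv hη z hz
  have h := hvV η hηv z hz
  rw [regularizedDensity_zero,
    regularizedDensity_of_pos hη (ha.trans_le hz.1) (hz.2.trans_lt hb)] at h
  exact h
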